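/- arXiv:1712.09677 — 10 statements merged into one kernel-verified Lean document; each statement's English description precedes it below -/
import Mathlib

section
/- Let (H_k)_{k≥1} be an arbitrary sequence of real m×m matrices, let ω, β ∈ ℝ, and define iterates by x₀ = x₁ ∈ ℝⁿ and x_{k+1} := x_k − ω B⁻¹AᵀH_k(Ax_k − b) + β(x_k − x_{k−1}) for k ≥ 1. Then for every k ≥ 0 the vector x_k − x₀ lies in the range of B⁻¹Aᵀ, and consequently Π_L^B(x_k) = Π_L^B(x₀) for all k ≥ 0. -/
open Matrix

/-- Expansion of the quadratic form of a symmetric matrix at a difference. -/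
theorem Matrix.IsSymm.sub_dotProduct_mulVec_sub {ι R : Type*} [Fintype ι] [CommRing R]
    {B : Matrix ι ι R} (hB : B.IsSymm) (d u : ι → R) :
    (d - u) ⬝ᵥ (B *ᵥ (d - u)) = d ⬝ᵥ (B *ᵥ d) - 2 * (d ⬝ᵥ (B *ᵥ u)) + u ⬝ᵥ (B *ᵥ u) := by
  have h : u ⬝ᵥ (B *ᵥ d) = d ⬝ᵥ (B *ᵥ u) := by
    rw [dotProduct_mulVec, ← mulVec_transpose, hB.eq, dotProduct_comm]
  rw [mulVec_sub, sub_dotProduct, dotProduct_sub, dotProduct_sub, h]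
  ring

/-- Moving the centre `c` of the quadratic form of `B` by a vector `u` with `B u = Aᵀ y` changes
its values on the solution set of `A z = b` by a constant. -/
theorem Matrix.IsSymm.quadForm_sub_add_of_mulVec_eq {κ ι R : Type*} [Fintype κ] [Fintype ι]
    [CommRing R] {A : Matrix κ ι R} {b y : κ → R} {B : Matrix ι ι R} (hB : B.IsSymm)
    {c u z : ι → R} (hu : B *ᵥ u = Aᵀ *ᵥ y) (hz : A *ᵥ z = b) :
    (z - (c + u)) ⬝ᵥ (B *ᵥ (z - (c + u))) =
      (z - c) ⬝ᵥ (B *ᵥ (z - c)) + (u ⬝ᵥ (B *ᵥ u) - 2 * ((b - A *ᵥ c) ⬝ᵥ y)) := by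
  rw [← sub_sub, hB.sub_dotProduct_mulVec_sub, hu, dotProduct_mulVec (z - c) Aᵀ, vecMul_transpose,
    mulVec_sub A, hz]
  ring

/-- Heavy-ball iterates whose steps lie in a submodule stay in the coset of the starting point. -/
theorem Submodule.heavyBall_sub_mem {R M : Type*} [Ring R] [AddCommGroup M] [Module R M]
    (W : Submodule R M) {x g : ℕ → M} {β : R} (hg : ∀ k, g k ∈ W) (hx : x 1 = x 0)
    (hrec : ∀ k, 1 ≤ k → x (k + 1) = x k - g k + β • (x k - x (k - 1))) (k : ℕ) :
    x k - x 0 ∈ W := by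
  suffices h : x k - x 0 ∈ W ∧ x (k + 1) - x 0 ∈ W from h.1
  induction k with
  | zero => simp [hx]
  | succ k ih =>
    refine ⟨ih.2, ?_⟩
    have h : x (k + 1 + 1) - x 0 =
        (x (k + 1) - x 0) - g (k + 1) + β • ((x (k + 1) - x 0) - (x k - x 0)) := by
      rw [hrec (k + 1) (Nat.le_add_left 1 k), Nat.add_sub_cancel, sub_sub_sub_cancel_right]
      abel
    rw [h]
    exact W.add_mem (W.sub_mem ih.2 (hg _)) (W.smul_mem _ (W.sub_mem ih.2 ih.1))

/-- Theorem 2 (invariance of the projection): for any sequence of matrices `H_k` and any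
`ω, β ∈ ℝ`, the iterates `x_{k+1} = x_k - ω B⁻¹AᵀH_k(Ax_k - b) + β(x_k - x_{k-1})`
started from `x₀ = x₁` satisfy `x_k - x₀ ∈ Range(B⁻¹Aᵀ)` for all `k`, and consequently
the `B`-projections of `x_k` and of `x₀` onto the solution set `L = {x : Ax = b}`
coincide (a point is a `B`-projection of `x₀` onto `L` iff it is one of `x_k`). -/
theorem mSGD_projection_invariance
    {m n : ℕ}
    (A : Matrix (Fin m) (Fin n) ℝ) (b : Fin m → ℝ)
    (B : Matrix (Fin n) (Fin n) ℝ) (hB : B.PosDef)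
    (hcons : ∃ x, A *ᵥ x = b)
    (H : ℕ → Matrix (Fin m) (Fin m) ℝ) (ω β : ℝ)
    (x : ℕ → Fin n → ℝ) (x₀ : Fin n → ℝ)
    (hx0 : x 0 = x₀) (hx1 : x 1 = x₀)
    (hrec : ∀ k, 1 ≤ k →
      x (k + 1) = x k - ω • (B⁻¹ *ᵥ (Aᵀ *ᵥ (H k *ᵥ (A *ᵥ x k - b))))
        + β • (x k - x (k - 1))) :
    ∀ k : ℕ,
      (∃ y : Fin m → ℝ, x k - x₀ = B⁻¹ *ᵥ (Aᵀ *ᵥ y)) ∧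
      (∀ p : Fin n → ℝ,
        (A *ᵥ p = b ∧ ∀ z, A *ᵥ z = b →
            (p - x₀) ⬝ᵥ (B *ᵥ (p - x₀)) ≤ (z - x₀) ⬝ᵥ (B *ᵥ (z - x₀))) ↔
        (A *ᵥ p = b ∧ ∀ z, A *ᵥ z = b →
            (p - x k) ⬝ᵥ (B *ᵥ (p - x k)) ≤ (z - x k) ⬝ᵥ (B *ᵥ (z - x k)))) := by
  intro k
  have hrange : ∃ y : Fin m → ℝ, x k - x₀ = B⁻¹ *ᵥ (Aᵀ *ᵥ y) := by
    have hmem := (LinearMap.range (B⁻¹.mulVecLin ∘ₗ Aᵀ.mulVecLin)).heavyBall_sub_mem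
      (g := fun k => ω • (B⁻¹ *ᵥ (Aᵀ *ᵥ (H k *ᵥ (A *ᵥ x k - b)))))
      (fun k => Submodule.smul_mem _ _ ⟨H k *ᵥ (A *ᵥ x k - b), rfl⟩)
      (hx1.trans hx0.symm) hrec k
    obtain ⟨y, hy⟩ := hmem
    exact ⟨y, hx0 ▸ hy.symm⟩
  refine ⟨hrange, fun p => ?_⟩
  obtain ⟨y, hy⟩ := hrange
  have hsymm : B.IsSymm := by simpa [IsHermitian, IsSymm] using hB.isHermitian
  have hu : B *ᵥ (x k - x₀) = Aᵀ *ᵥ y := by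
    rw [hy, mulVec_mulVec, mul_nonsing_inv B (B.isUnit_iff_isUnit_det.mp hB.isUnit), one_mulVec]
  have hshift := fun (z : Fin n → ℝ) (hz : A *ᵥ z = b) =>
    hsymm.quadForm_sub_add_of_mulVec_eq (c := x₀) hu hz
  rw [add_sub_cancel] at hshift
  refine and_congr_right fun hp => forall₂_congr fun z hz => ?_
  rw [hshift p hp, hshift z hz, add_le_add_iff_right]
end

section
/- Let (H_k)_{k≥1} be an arbitrary sequence of real m×m matrices, let ω, β ∈ ℝ, and let x₀ = x₁ ∈ ℝⁿ. Define primal iterates x_{k+1} := x_k − ω B⁻¹AᵀH_k(Ax_k − b) + β(x_k − x_{k−1}) for k ≥ 1, and dual iterates y₀ = y₁ = 0 ∈ ℝ^m, y_{k+1} := y_k + ω H_k(b − A(x₀ + B⁻¹Aᵀy_k)) + β(y_k − y_{k−1}) for k ≥ 1. Then for every k ≥ 0, x_k = x₀ + B⁻¹Aᵀy_k; that is, the primal iterates arise as affine images of the dual iterates under the map φ(y) := x₀ + B⁻¹Aᵀy. -/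
open Matrix

/-- Theorem 3 (correspondence between primal and dual methods with momentum): for any
sequence of matrices `H_k` and any `ω, β ∈ ℝ`, the primal iterates
`x_{k+1} = x_k - ω B⁻¹AᵀH_k(Ax_k - b) + β(x_k - x_{k-1})` (with `x₀ = x₁`) and the dual
iterates `y_{k+1} = y_k + ω H_k(b - A(x₀ + B⁻¹Aᵀy_k)) + β(y_k - y_{k-1})`
(with `y₀ = y₁ = 0`) satisfy `x_k = x₀ + B⁻¹Aᵀy_k` for every `k`. -/
theorem primal_dual_correspondence
    {m n : ℕ}
    (A : Matrix (Fin m) (Fin n) ℝ) (b : Fin m → ℝ)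
    (B : Matrix (Fin n) (Fin n) ℝ) (hB : B.PosDef)
    (H : ℕ → Matrix (Fin m) (Fin m) ℝ) (ω β : ℝ)
    (x₀ : Fin n → ℝ)
    (x : ℕ → Fin n → ℝ) (y : ℕ → Fin m → ℝ)
    (hx0 : x 0 = x₀) (hx1 : x 1 = x₀)
    (hy0 : y 0 = 0) (hy1 : y 1 = 0)
    (hxrec : ∀ k, 1 ≤ k →
      x (k + 1) = x k - ω • (B⁻¹ *ᵥ (Aᵀ *ᵥ (H k *ᵥ (A *ᵥ x k - b))))
        + β • (x k - x (k - 1)))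
    (hyrec : ∀ k, 1 ≤ k →
      y (k + 1) = y k + ω • (H k *ᵥ (b - A *ᵥ (x₀ + B⁻¹ *ᵥ (Aᵀ *ᵥ y k))))
        + β • (y k - y (k - 1))) :
    ∀ k : ℕ, x k = x₀ + B⁻¹ *ᵥ (Aᵀ *ᵥ y k) := by
  intro k
  induction k using Nat.twoStepInduction with
  | zero => simp [hx0, hy0]
  | one => simp [hx1, hy1]
  | more k ih₀ ih₁ =>
    have hx := hxrec (k + 1) (Nat.le_add_left 1 k)
    have hy := hyrec (k + 1) (Nat.le_add_left 1 k)
    rw [Nat.add_sub_cancel] at hx hy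
    rw [← ih₁, ← neg_sub (A *ᵥ x (k + 1)) b] at hy
    rw [hx, hy]
    simp only [mulVec_add, mulVec_sub, mulVec_smul, mulVec_neg] at ih₀ ih₁ ⊢
    rw [ih₀]
    nth_rewrite 1 3 [ih₁]
    module
end

section
/- Let n ≥ 1 be an integer, g > 0, and 0 < λ_min⁺ ≤ λ_max. With the total-complexity functions C_mSGD(β) := (g+n)/(1 − q(β)) and C_smSGD(β) := g/(1 − q̄(β)), the ratio of total complexities satisfies lim_{β → 0⁺} C_mSGD(β)/C_smSGD(βn) = (g+n)/g = 1 + n/g. -/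
open Filter

/-- Theorem 10 (speedup of stochastic momentum): for small `β`, the total complexity of
smSGD is approximately `1 + n/g` times smaller than that of mSGD; precisely,
`C_mSGD(β)/C_smSGD(βn) → (g+n)/g = 1 + n/g` as `β → 0⁺`. -/
theorem stochastic_momentum_speedup
    (n : ℕ) (hn : 1 ≤ n) (g lminp lmax : ℝ)
    (hg : 0 < g) (hl0 : 0 < lminp) (hl : lminp ≤ lmax)
    (a₁ a₂ ab₁ ab₂ q qb Cm Csm : ℝ → ℝ)
    (ha₁ : ∀ β, a₁ β = 1 + 3 * β + 2 * β ^ 2 - (1 + β) * lminp)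
    (ha₂ : ∀ β, a₂ β = β + 2 * β ^ 2 + β * lmax)
    (hab₁ : ∀ β, ab₁ β = 1 + 3 * β / n + 2 * β ^ 2 / n - (1 + β / n) * lminp)
    (hab₂ : ∀ β, ab₂ β = (β + 2 * β ^ 2 + β * lmax) / n)
    (hq : ∀ β, q β = (a₁ β + Real.sqrt ((a₁ β) ^ 2 + 4 * a₂ β)) / 2)
    (hqb : ∀ β, qb β = (ab₁ β + Real.sqrt ((ab₁ β) ^ 2 + 4 * ab₂ β)) / 2)
    (hCm : ∀ β, Cm β = (g + n) / (1 - q β))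
    (hCsm : ∀ β, Csm β = g / (1 - qb β)) :
    Tendsto (fun β : ℝ => Cm β / Csm (β * n)) (nhdsWithin 0 (Set.Ioi 0))
      (nhds ((g + n) / g)) ∧ (g + n) / g = 1 + n / g := by
  refine ⟨?_, by field_simp⟩
  have hq0 : q 0 < 1 := by
    have hsqrt : Real.sqrt ((1 - lminp) ^ 2) < 1 + lminp := by
      rw [Real.sqrt_sq_eq_abs, abs_lt]
      constructor <;> linarith
    simp only [hq, ha₁, ha₂]
    norm_num
    linarith
  have hqb0 : qb 0 = q 0 := by simp [hq, hqb, ha₁, ha₂, hab₁, hab₂]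
  have hqc : Continuous q := by
    simp only [funext hq, ha₁, ha₂]
    fun_prop
  have hqbc : Continuous qb := by
    simp only [funext hqb, hab₁, hab₂]
    fun_prop
  have hden : 1 - q 0 ≠ 0 := by linarith
  have hden' : 1 - qb (0 * n) ≠ 0 := by rwa [zero_mul, hqb0]
  have hCmc : ContinuousAt Cm 0 := by
    rw [funext hCm]
    exact continuousAt_const.div (by fun_prop) hden
  have hCsmc : ContinuousAt (fun β : ℝ => Csm (β * n)) 0 := by
    simp only [hCsm]
    exact continuousAt_const.div (by fun_prop) hden'
  have hCsm0 : Csm (0 * n) ≠ 0 := by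
    rw [hCsm]
    exact div_ne_zero hg.ne' hden'
  have hvalue : Cm 0 / Csm (0 * n) = (g + n) / g := by
    rw [hCm, hCsm, zero_mul, hqb0]
    field_simp
  have hlim := (hCmc.div hCsmc hCsm0).tendsto
  simp only [Pi.div_apply, hvalue] at hlim
  exact hlim.mono_left nhdsWithin_le_nhds
end

section
/- Fix F₁ = F₀ ≥ 0 and let (F_k)_{k≥0} be a sequence of nonnegative real numbers satisfying F_{k+1} ≤ a₁F_k + a₂F_{k−1} for all k ≥ 1, where a₂ ≥ 0, a₁ + a₂ < 1, and at least one of a₁, a₂ is positive. Let q := (a₁ + √(a₁² + 4a₂))/2 and δ := q − a₁. Then δ ≥ 0, 0 < q < 1, and F_{k+1} ≤ q^k (1+δ) F₀ for all k ≥ 1. Moreover q ≥ a₁ + a₂, with equality if and only if a₂ = 0. -/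
/-- Lemma 5 (key recurrence lemma): if `F₁ = F₀ ≥ 0` and the nonnegative sequence
`(F_k)` satisfies `F_{k+1} ≤ a₁ F_k + a₂ F_{k-1}` for all `k ≥ 1`, where `a₂ ≥ 0`,
`a₁ + a₂ < 1` and at least one of `a₁, a₂` is positive, then with
`q = (a₁ + √(a₁² + 4a₂))/2` and `δ = q - a₁` we have `δ ≥ 0`, `0 < q < 1`,
`F_{k+1} ≤ q^k (1+δ) F₀` for all `k ≥ 1`, and `q ≥ a₁ + a₂` with equality iff `a₂ = 0`. -/
theorem recurrence_lemma
    (a₁ a₂ : ℝ) (F : ℕ → ℝ)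
    (hF10 : F 1 = F 0) (hF0 : 0 ≤ F 0)
    (hFnonneg : ∀ k, 0 ≤ F k)
    (hrec : ∀ k, 1 ≤ k → F (k + 1) ≤ a₁ * F k + a₂ * F (k - 1))
    (ha₂ : 0 ≤ a₂) (hsum : a₁ + a₂ < 1) (hpos : 0 < a₁ ∨ 0 < a₂)
    (q δ : ℝ)
    (hq : q = (a₁ + Real.sqrt (a₁ ^ 2 + 4 * a₂)) / 2)
    (hδ : δ = q - a₁) :
    0 ≤ δ ∧ 0 < q ∧ q < 1 ∧
      (∀ k, 1 ≤ k → F (k + 1) ≤ q ^ k * (1 + δ) * F 0) ∧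
      a₁ + a₂ ≤ q ∧ (a₁ + a₂ = q ↔ a₂ = 0) := by
  have hrad : 0 ≤ a₁ ^ 2 + 4 * a₂ := by positivity
  have hsq := Real.sq_sqrt hrad
  have habs : |a₁| ≤ Real.sqrt (a₁ ^ 2 + 4 * a₂) := Real.abs_le_sqrt (by linarith)
  have hδ0 : 0 ≤ δ := by linarith [le_abs_self a₁]
  have hq0 : 0 ≤ q := by linarith [neg_abs_le a₁]
  have hδq : δ * q = a₂ := by
    subst hδ hq
    linear_combination hsq / 4
  have hqpos : 0 < q := by
    rcases hpos with h | h
    · linarith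
    · exact pos_of_mul_pos_right (hδq ▸ h) hδ0
  have hq1 : q < 1 := by
    have h : 0 < (1 + δ) * (1 - q) := by
      have : (1 + δ) * (1 - q) = 1 - a₁ - a₂ := by linear_combination hδ - hδq
      linarith
    linarith [pos_of_mul_pos_right h (by linarith)]
  have hgap : q - (a₁ + a₂) = δ * (1 - q) := by linear_combination hδq - hδ
  have hbound : ∀ k, F (k + 1) + δ * F k ≤ q ^ k * (1 + δ) * F 0 := by
    intro k
    induction k with
    | zero =>
      rw [zero_add, hF10]
      exact le_of_eq (by ring)
    | succ k ih =>
      have hstep : F (k + 1 + 1) ≤ a₁ * F (k + 1) + a₂ * F k := hrec (k + 1) (by omega)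
      calc F (k + 1 + 1) + δ * F (k + 1)
          ≤ a₁ * F (k + 1) + a₂ * F k + δ * F (k + 1) := by gcongr
        _ = q * (F (k + 1) + δ * F k) := by
          linear_combination F (k + 1) * hδ - F k * hδq
        _ ≤ q * (q ^ k * (1 + δ) * F 0) := by gcongr
        _ = q ^ (k + 1) * (1 + δ) * F 0 := by ring
  refine ⟨hδ0, hqpos, hq1, fun k _ => ?_, ?_, fun h => ?_, fun h => ?_⟩
  · linarith [hbound k, mul_nonneg hδ0 (hFnonneg k)]
  · linarith [mul_nonneg hδ0 (sub_nonneg.2 hq1.le)]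
  · have hz : δ * (1 - q) = 0 := by linarith
    have hδz : δ = 0 := (mul_eq_zero.1 hz).resolve_right (by linarith)
    rw [← hδq, hδz, zero_mul]
  · have hδz : δ = 0 := (mul_eq_zero.1 (hδq.trans h)).resolve_right hqpos.ne'
    linarith
end

section
/- Let H ∈ ℝ^{m×m} be symmetric positive semidefinite and set Z := AᵀHA; assume Z B⁻¹ Z = Z. Define f_H(x) := ½(Ax−b)ᵀH(Ax−b) and g(x) := B⁻¹AᵀH(Ax−b). Then for every x ∈ ℝⁿ: (i) f_H(x) = ½‖g(x)‖²_B = ½ g(x)ᵀ B g(x); and (ii) for every x_* with Ax_* = b, f_H(x) = ½⟨g(x), x − x_*⟩_B = ½ g(x)ᵀ B (x − x_*). -/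
open Matrix

/-- A symmetric matrix is self-adjoint for the dot product. -/
theorem Matrix.IsSymm.dotProduct_mulVec_comm {ι R : Type*} [Fintype ι] [CommSemiring R]
    {M : Matrix ι ι R} (hM : M.IsSymm) (v w : ι → R) :
    v ⬝ᵥ (M *ᵥ w) = (M *ᵥ v) ⬝ᵥ w := by
  rw [dotProduct_mulVec, ← mulVec_transpose, hM.eq]

/-- Lemma 6: with `H` symmetric positive semidefinite, `Z := AᵀHA` satisfying
`Z B⁻¹ Z = Z`, `f_H(x) := ½(Ax-b)ᵀH(Ax-b)` and `g(x) := B⁻¹AᵀH(Ax-b)` (the gradient of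
`f_H` in the `B`-inner product), we have `f_H(x) = ½‖g(x)‖²_B` for all `x`, and
`f_H(x) = ½⟨g(x), x - x_*⟩_B` whenever `Ax_* = b`. -/
theorem stochastic_function_identities
    {m n : ℕ}
    (A : Matrix (Fin m) (Fin n) ℝ) (b : Fin m → ℝ)
    (B : Matrix (Fin n) (Fin n) ℝ) (hB : B.PosDef)
    (hcons : ∃ x, A *ᵥ x = b)
    (H : Matrix (Fin m) (Fin m) ℝ) (hH : H.PosSemidef)
    (hZ : (Aᵀ * H * A) * B⁻¹ * (Aᵀ * H * A) = Aᵀ * H * A)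
    (fH : (Fin n → ℝ) → ℝ)
    (hfH : ∀ x, fH x = (1 / 2) * ((A *ᵥ x - b) ⬝ᵥ (H *ᵥ (A *ᵥ x - b))))
    (g : (Fin n → ℝ) → (Fin n → ℝ))
    (hg : ∀ x, g x = B⁻¹ *ᵥ (Aᵀ *ᵥ (H *ᵥ (A *ᵥ x - b)))) :
    (∀ x, fH x = (1 / 2) * (g x ⬝ᵥ (B *ᵥ g x))) ∧
    (∀ x xstar, A *ᵥ xstar = b → fH x = (1 / 2) * (g x ⬝ᵥ (B *ᵥ (x - xstar)))) := by
  have hBsymm : B.IsSymm := by simpa using hB.isHermitian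
  have hHsymm : H.IsSymm := by simpa using hH.isHermitian
  have hZsymm : (Aᵀ * H * A).IsSymm := by
    simp [Matrix.IsSymm, transpose_mul, hHsymm.eq, Matrix.mul_assoc]
  have hBdet : IsUnit B.det := (Matrix.isUnit_iff_isUnit_det B).1 hB.isUnit
  have residual (x xstar : Fin n → ℝ) (h : A *ᵥ xstar = b) :
      A *ᵥ x - b = A *ᵥ (x - xstar) := by rw [mulVec_sub, h]
  have hf (x xstar : Fin n → ℝ) (h : A *ᵥ xstar = b) :
      fH x = (1 / 2) * ((x - xstar) ⬝ᵥ ((Aᵀ * H * A) *ᵥ (x - xstar))) := by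
    rw [hfH, residual x xstar h, ← mulVec_mulVec, ← mulVec_mulVec,
      dotProduct_mulVec (x - xstar), vecMul_transpose]
  have hgZ (x xstar : Fin n → ℝ) (h : A *ᵥ xstar = b) :
      g x = B⁻¹ *ᵥ ((Aᵀ * H * A) *ᵥ (x - xstar)) := by
    rw [hg, residual x xstar h, ← mulVec_mulVec, ← mulVec_mulVec]
  have hBg (x xstar : Fin n → ℝ) (h : A *ᵥ xstar = b) :
      B *ᵥ g x = (Aᵀ * H * A) *ᵥ (x - xstar) := by
    rw [hgZ x xstar h, mulVec_mulVec, Matrix.mul_nonsing_inv B hBdet, one_mulVec]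
  constructor
  · intro x
    obtain ⟨xstar, h⟩ := hcons
    rw [hBsymm.dotProduct_mulVec_comm, hBg x xstar h, hgZ x xstar h, hf x xstar h,
      ← hZsymm.dotProduct_mulVec_comm, mulVec_mulVec, mulVec_mulVec, hZ]
  · intro x xstar h
    rw [hBsymm.dotProduct_mulVec_comm, hBg x xstar h, hf x xstar h,
      hZsymm.dotProduct_mulVec_comm]
end

section
/- Let n ≥ 1 be an integer and 0 ≤ λ_min⁺ ≤ λ_max. Then for every β ≥ 0, the convergence rate of smSGD with momentum parameter βn is at least that of mSGD with momentum parameter β: q̄(βn) ≥ q(β). In particular, ā₁(βn) − a₁(β) = 2β²(n−1) ≥ 0 and ā₂(βn) − a₂(β) = 2β²(n−1) ≥ 0. -/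
/-- The larger root of `t ^ 2 = x * t + c` is monotone in `x` and in `c ≥ 0`. -/
lemma add_sqrt_sq_add_four_mul_le {x y c d : ℝ} (hxy : x ≤ y) (hcd : c ≤ d) (hd : 0 ≤ d) :
    x + Real.sqrt (x ^ 2 + 4 * c) ≤ y + Real.sqrt (y ^ 2 + 4 * d) := by
  have habs : |y| ≤ Real.sqrt (y ^ 2 + 4 * d) := Real.abs_le_sqrt (by linarith)
  have hsq : Real.sqrt (y ^ 2 + 4 * d) ^ 2 = y ^ 2 + 4 * d := Real.sq_sqrt (by positivity)
  have hneg : 0 ≤ y + Real.sqrt (y ^ 2 + 4 * d) := by linarith [neg_abs_le y]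
  have hle : Real.sqrt (x ^ 2 + 4 * c) ≤ y - x + Real.sqrt (y ^ 2 + 4 * d) := by
    refine Real.sqrt_le_iff.mpr ⟨by linarith [Real.sqrt_nonneg (y ^ 2 + 4 * d)], ?_⟩
    nlinarith [mul_nonneg (sub_nonneg.mpr hxy) hneg]
  linarith

/-- Momentum versus stochastic momentum (unit stepsize `ω = 1`): for every `β ≥ 0`, the
rate of smSGD with momentum parameter `βn` is at least the rate of mSGD with momentum
parameter `β`: `q̄(βn) ≥ q(β)`; in particular `ā₁(βn) - a₁(β) = 2β²(n-1) ≥ 0` and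
`ā₂(βn) - a₂(β) = 2β²(n-1) ≥ 0`. -/
theorem smSGD_rate_worse_than_mSGD
    (n : ℕ) (hn : 1 ≤ n) (lminp lmax : ℝ) (hl0 : 0 ≤ lminp) (hl : lminp ≤ lmax)
    (a₁ a₂ ab₁ ab₂ q qb : ℝ → ℝ)
    (ha₁ : ∀ β, a₁ β = 1 + 3 * β + 2 * β ^ 2 - (1 + β) * lminp)
    (ha₂ : ∀ β, a₂ β = β + 2 * β ^ 2 + β * lmax)
    (hab₁ : ∀ β, ab₁ β = 1 + 3 * β / n + 2 * β ^ 2 / n - (1 + β / n) * lminp)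
    (hab₂ : ∀ β, ab₂ β = (β + 2 * β ^ 2 + β * lmax) / n)
    (hq : ∀ β, q β = (a₁ β + Real.sqrt ((a₁ β) ^ 2 + 4 * a₂ β)) / 2)
    (hqb : ∀ β, qb β = (ab₁ β + Real.sqrt ((ab₁ β) ^ 2 + 4 * ab₂ β)) / 2) :
    ∀ β : ℝ, 0 ≤ β →
      q β ≤ qb (β * n) ∧
      ab₁ (β * n) - a₁ β = 2 * β ^ 2 * (n - 1) ∧
      ab₂ (β * n) - a₂ β = 2 * β ^ 2 * (n - 1) ∧
      (0 : ℝ) ≤ 2 * β ^ 2 * (n - 1) := by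
  intro β hβ
  have hn1 : (1 : ℝ) ≤ n := by exact_mod_cast hn
  have hn0 : (n : ℝ) ≠ 0 := by positivity
  have h₁ : ab₁ (β * n) - a₁ β = 2 * β ^ 2 * (n - 1) := by
    rw [hab₁, ha₁]
    field_simp
    ring
  have h₂ : ab₂ (β * n) - a₂ β = 2 * β ^ 2 * (n - 1) := by
    rw [hab₂, ha₂]
    field_simp
    ring
  have hnonneg : (0 : ℝ) ≤ 2 * β ^ 2 * (n - 1) :=
    mul_nonneg (by positivity) (sub_nonneg.mpr hn1)
  have ha₂_nonneg : 0 ≤ a₂ β := by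
    have hlmax : 0 ≤ lmax := hl0.trans hl
    rw [ha₂]
    positivity
  refine ⟨?_, h₁, h₂, hnonneg⟩
  rw [hq, hqb]
  have hmono := add_sqrt_sq_add_four_mul_le (x := a₁ β) (y := ab₁ (β * n)) (c := a₂ β)
    (d := ab₂ (β * n)) (by linarith) (by linarith) (by linarith)
  linarith
end

section
/- Let 0 < ω < 2 and 0 < λ_min⁺ ≤ λ_max. If 0 ≤ β < (1/8)·(−4 + ωλ_min⁺ − ωλ_max + √((4 − ωλ_min⁺ + ωλ_max)² + 16ω(2−ω)λ_min⁺)), then a₁ + a₂ < 1, where a₁ := 1 + 3β + 2β² − (ω(2−ω) + ωβ)λ_min⁺ and a₂ := β + 2β² + ωβλ_max. Moreover, the stated upper bound on β is strictly positive, so this interval of admissible momentum parameters is nonempty. -/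
/-- For `0 < ω < 2` and `0 < λ_min⁺ ≤ λ_max`, every momentum parameter `β` with
`0 ≤ β < (1/8)(-4 + ωλ_min⁺ - ωλ_max + √((4 - ωλ_min⁺ + ωλ_max)² + 16ω(2-ω)λ_min⁺))`
satisfies the condition `a₁ + a₂ < 1` of the linear convergence theorem for
mSGD/mSN/mSPP; moreover this upper bound on `β` is strictly positive. -/
theorem mSGD_admissible_momentum_interval
    (ω lminp lmax : ℝ)
    (hω0 : 0 < ω) (hω2 : ω < 2) (hl0 : 0 < lminp) (hl : lminp ≤ lmax) :
    (∀ β : ℝ, 0 ≤ β →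
      β < (1 / 8) * (-4 + ω * lminp - ω * lmax +
        Real.sqrt ((4 - ω * lminp + ω * lmax) ^ 2 + 16 * ω * (2 - ω) * lminp)) →
      (1 + 3 * β + 2 * β ^ 2 - (ω * (2 - ω) + ω * β) * lminp) +
        (β + 2 * β ^ 2 + ω * β * lmax) < 1) ∧
    0 < (1 / 8) * (-4 + ω * lminp - ω * lmax +
        Real.sqrt ((4 - ω * lminp + ω * lmax) ^ 2 + 16 * ω * (2 - ω) * lminp)) := by
  have hB : 0 < 4 - ω * lminp + ω * lmax := by nlinarith
  have hC : 0 < 16 * ω * (2 - ω) * lminp := by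
    have : 0 < 2 - ω := by linarith
    positivity
  refine ⟨fun β hβ0 hβ => ?_, ?_⟩
  · have h : 8 * β + (4 - ω * lminp + ω * lmax) <
        Real.sqrt ((4 - ω * lminp + ω * lmax) ^ 2 + 16 * ω * (2 - ω) * lminp) := by
      linarith
    rw [Real.lt_sqrt (by linarith)] at h
    linarith
  · have h : 4 - ω * lminp + ω * lmax <
        Real.sqrt ((4 - ω * lminp + ω * lmax) ^ 2 + 16 * ω * (2 - ω) * lminp) :=
      Real.lt_sqrt_of_sq_lt (by linarith)
    linarith
end

section
/- Let n ≥ 1 be an integer, 0 < ω < 2 and 0 < λ_min⁺ ≤ λ_max. If 0 ≤ β < (1/8)·(−4 + ωλ_min⁺ − ωλ_max + √((4 − ωλ_min⁺ + ωλ_max)² + 16nω(2−ω)λ_min⁺)), then a₁ + a₂ < 1, where a₁ := 1 + 3β/n + 2β²/n − (ω(2−ω) + ωβ/n)λ_min⁺ and a₂ := (β + 2β² + ωβλ_max)/n. -/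
/-- For `n ≥ 1`, `0 < ω < 2` and `0 < λ_min⁺ ≤ λ_max`, every momentum parameter `β` with
`0 ≤ β < (1/8)(-4 + ωλ_min⁺ - ωλ_max + √((4 - ωλ_min⁺ + ωλ_max)² + 16nω(2-ω)λ_min⁺))`
satisfies the condition `a₁ + a₂ < 1` of the linear convergence theorem for
smSGD/smSN/smSPP. -/
theorem smSGD_admissible_momentum_interval
    (n : ℕ) (hn : 1 ≤ n) (ω lminp lmax : ℝ)
    (hω0 : 0 < ω) (hω2 : ω < 2) (hl0 : 0 < lminp) (hl : lminp ≤ lmax) :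
    ∀ β : ℝ, 0 ≤ β →
      β < (1 / 8) * (-4 + ω * lminp - ω * lmax +
        Real.sqrt ((4 - ω * lminp + ω * lmax) ^ 2 + 16 * n * ω * (2 - ω) * lminp)) →
      (1 + 3 * β / n + 2 * β ^ 2 / n - (ω * (2 - ω) + ω * β / n) * lminp) +
        (β + 2 * β ^ 2 + ω * β * lmax) / n < 1 := by
  intro β hβ hlt
  have hn' : (0 : ℝ) < n := by exact_mod_cast hn
  have hb : 0 ≤ ω * (lmax - lminp) := mul_nonneg hω0.le (sub_nonneg.2 hl)
  have hsqrt : 8 * β + (4 - ω * lminp + ω * lmax) <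
      Real.sqrt ((4 - ω * lminp + ω * lmax) ^ 2 + 16 * n * ω * (2 - ω) * lminp) := by
    linarith
  rw [Real.lt_sqrt (by linarith)] at hsqrt
  have hquad : 4 * β ^ 2 + (4 - ω * lminp + ω * lmax) * β - n * (ω * (2 - ω) * lminp) < 0 := by
    linarith
  have hdiv := div_neg_of_neg_of_pos hquad hn'
  have hsum : (1 + 3 * β / n + 2 * β ^ 2 / n - (ω * (2 - ω) + ω * β / n) * lminp) +
      (β + 2 * β ^ 2 + ω * β * lmax) / n =
      1 + (4 * β ^ 2 + (4 - ω * lminp + ω * lmax) * β - n * (ω * (2 - ω) * lminp)) / n := by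
    field_simp
    ring
  linarith
end

section
/- Let ω ≥ 0, β ≥ 0 and 0 ≤ λ_min⁺ ≤ λ_max, set a₁ := 1 + 3β + 2β² − (ω(2−ω) + ωβ)λ_min⁺ and a₂ := β + 2β² + ωβλ_max, and assume a₁ + a₂ ≤ 1. Then the convergence rate q(β) := (a₁ + √(a₁² + 4a₂))/2 satisfies q(β) ≥ a₁ + a₂ = 1 + 4β + 4β² + ωβ(λ_max − λ_min⁺) − ω(2−ω)λ_min⁺ ≥ 1 − ω(2−ω)λ_min⁺; in particular, the rate of mSGD with any momentum β ≥ 0 is never better than the rate 1 − ω(2−ω)λ_min⁺ of SGD without momentum. -/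
/-- The theoretical rate of mSGD is never better than that of SGD without momentum:
with `a₁ = 1 + 3β + 2β² - (ω(2-ω) + ωβ)λ_min⁺` and `a₂ = β + 2β² + ωβλ_max`, assuming
`a₁ + a₂ ≤ 1`, the rate `q(β) = (a₁ + √(a₁² + 4a₂))/2` satisfies
`q(β) ≥ a₁ + a₂ = 1 + 4β + 4β² + ωβ(λ_max - λ_min⁺) - ω(2-ω)λ_min⁺ ≥ 1 - ω(2-ω)λ_min⁺`. -/
theorem mSGD_rate_lower_bound
    (ω β lminp lmax : ℝ)
    (hω : 0 ≤ ω) (hβ : 0 ≤ β) (hl0 : 0 ≤ lminp) (hl : lminp ≤ lmax)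
    (a₁ a₂ q : ℝ)
    (ha₁ : a₁ = 1 + 3 * β + 2 * β ^ 2 - (ω * (2 - ω) + ω * β) * lminp)
    (ha₂ : a₂ = β + 2 * β ^ 2 + ω * β * lmax)
    (hsum : a₁ + a₂ ≤ 1)
    (hq : q = (a₁ + Real.sqrt (a₁ ^ 2 + 4 * a₂)) / 2) :
    a₁ + a₂ ≤ q ∧
    a₁ + a₂ = 1 + 4 * β + 4 * β ^ 2 + ω * β * (lmax - lminp) - ω * (2 - ω) * lminp ∧
    1 - ω * (2 - ω) * lminp ≤ a₁ + a₂ := by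
  have ha₂_nonneg : 0 ≤ a₂ := by
    have : 0 ≤ lmax := hl0.trans hl
    rw [ha₂]
    positivity
  have hsum_eq : a₁ + a₂ =
      1 + 4 * β + 4 * β ^ 2 + ω * β * (lmax - lminp) - ω * (2 - ω) * lminp := by
    rw [ha₁, ha₂]
    ring
  refine ⟨?_, hsum_eq, ?_⟩
  · have hsqrt : a₁ + 2 * a₂ ≤ Real.sqrt (a₁ ^ 2 + 4 * a₂) :=
      Real.le_sqrt_of_sq_le (by nlinarith [mul_le_mul_of_nonneg_left hsum ha₂_nonneg])
    rw [hq]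
    linarith
  · have hgap : 0 ≤ ω * β * (lmax - lminp) :=
      mul_nonneg (mul_nonneg hω hβ) (sub_nonneg.2 hl)
    rw [hsum_eq]
    linarith [sq_nonneg β]
end

section
/- Let ω, λ ∈ ℝ with 0 < ωλ ≤ 1, and let β satisfy (1 − √(ωλ))² < β < 1. Let (s_k)_{k≥0} be any real sequence satisfying the recurrence s_{k+1} = (1 + β − ωλ)s_k − β s_{k−1} for k ≥ 1. Then there exists a constant P ≥ 0 (depending on s₀ and s₁) such that |s_k| ≤ 2P·β^{k/2} for all k ≥ 0. -/
/-- The quadratic form `y² - a x y + b x²` is multiplied by `b` along each step of the recurrence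
`u (k + 2) = a * u (k + 1) - b * u k`. -/
theorem recurrence_quadratic_form_eq (a b : ℝ) (u : ℕ → ℝ)
    (hu : ∀ k, u (k + 2) = a * u (k + 1) - b * u k) (k : ℕ) :
    u (k + 1) ^ 2 - a * u (k + 1) * u k + b * u k ^ 2 =
      b ^ k * (u 1 ^ 2 - a * u 1 * u 0 + b * u 0 ^ 2) := by
  induction k with
  | zero => simp
  | succ k ih =>
    rw [pow_succ' b k, mul_assoc b, ← ih, hu k]
    ring

/-- If the characteristic roots of a second-order linear recurrence are not real, then its
solutions are bounded by a multiple of the powers of their modulus. -/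
theorem exists_abs_le_mul_sqrt_pow_of_discrim_neg (a b : ℝ) (hab : a ^ 2 < 4 * b) (u : ℕ → ℝ)
    (hu : ∀ k, u (k + 2) = a * u (k + 1) - b * u k) :
    ∃ C : ℝ, 0 ≤ C ∧ ∀ k, |u k| ≤ C * Real.sqrt b ^ k := by
  have hb : 0 ≤ b := by nlinarith [sq_nonneg a]
  have hd : 0 < b - a ^ 2 / 4 := by linarith
  set q := u 1 ^ 2 - a * u 1 * u 0 + b * u 0 ^ 2 with hq
  have hq0 : 0 ≤ q := by
    nlinarith [sq_nonneg (u 1 - a / 2 * u 0), mul_nonneg hd.le (sq_nonneg (u 0))]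
  refine ⟨Real.sqrt (q / (b - a ^ 2 / 4)), Real.sqrt_nonneg _, fun k => ?_⟩
  refine abs_le_of_sq_le_sq ?_ (by positivity)
  rw [mul_pow, Real.sq_sqrt (div_nonneg hq0 hd.le), ← pow_mul, mul_comm k, pow_mul,
    Real.sq_sqrt hb, div_mul_eq_mul_div, le_div_iff₀ hd]
  nlinarith [recurrence_quadratic_form_eq a b u hu k, sq_nonneg (u (k + 1) - a / 2 * u k)]

/-- Any real sequence satisfying the recurrence `s_{k+1} = (1 + β - ωλ)s_k - β s_{k-1}`
for `k ≥ 1`, with `0 < ωλ ≤ 1` and `(1 - √(ωλ))² < β < 1`, satisfies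
`|s_k| ≤ 2 P β^{k/2}` for all `k ≥ 0`, for some constant `P ≥ 0` depending on `s₀, s₁`. -/
theorem recurrence_complex_roots_decay
    (ω lam β : ℝ) (h0 : 0 < ω * lam) (h1 : ω * lam ≤ 1)
    (hβl : (1 - Real.sqrt (ω * lam)) ^ 2 < β) (hβu : β < 1)
    (s : ℕ → ℝ)
    (hrec : ∀ k, 1 ≤ k → s (k + 1) = (1 + β - ω * lam) * s k - β * s (k - 1)) :
    ∃ P : ℝ, 0 ≤ P ∧ ∀ k : ℕ, |s k| ≤ 2 * P * Real.sqrt β ^ k := by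
  have ht : Real.sqrt (ω * lam) ^ 2 = ω * lam := Real.sq_sqrt h0.le
  have ht1 : Real.sqrt (ω * lam) ≤ 1 := Real.sqrt_le_one.mpr h1
  have hβ : 0 < β := (sq_nonneg _).trans_lt hβl
  have hr : Real.sqrt β ^ 2 = β := Real.sq_sqrt hβ.le
  have hr0 : 0 < Real.sqrt β := Real.sqrt_pos.mpr hβ
  have hr1 : Real.sqrt β < 1 := (Real.sqrt_lt' one_pos).mpr (by simpa using hβu)
  have htr : 1 - Real.sqrt (ω * lam) < Real.sqrt β := Real.lt_sqrt_of_sq_lt hβl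
  have hlower : 0 < 2 * Real.sqrt β - (1 + β - ω * lam) := by nlinarith
  have hupper : 0 < 2 * Real.sqrt β + (1 + β - ω * lam) := by linarith
  have hdisc : (1 + β - ω * lam) ^ 2 < 4 * β := by nlinarith [mul_pos hlower hupper]
  obtain ⟨C, hC, hs⟩ := exists_abs_le_mul_sqrt_pow_of_discrim_neg (1 + β - ω * lam) β hdisc s
    fun k => hrec (k + 1) k.succ_pos
  exact ⟨C / 2, by positivity, fun k => (hs k).trans_eq (by ring)⟩
end
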